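/- Balanced truncation error bound: let a stable linear system be given in balanced coordinates, i.e. A ∈ ℝ^{N×N} Hurwitz, B ∈ ℝ^{N×p}, L ∈ ℝ^{q×N}, such that the matrix Σ = diag(σ₁, …, σ_N) with σ₁ ≥ … ≥ σ_N > 0 satisfies both Lyapunov equations A·Σ + Σ·Aᵀ = −B·Bᵀ and Aᵀ·Σ + Σ·A = −Lᵀ·L, and assume the σᵢ are pairwise distinct. For 1 ≤ r < N, let Ã = A₁₁ ∈ ℝ^{r×r}, B̃ = B₁ ∈ ℝ^{r×p}, L̃ = L₁ ∈ ℝ^{q×r} be the leading blocks obtained by truncating the last N − r states. Then for every ω ∈ ℝ the resolvents (iωI − A) and (iωI − Ã) are invertible and sup_{ω ∈ ℝ} ‖L(iωI − A)⁻¹B − L̃(iωI − Ã)⁻¹B̃‖ ≤ 2(σ_{r+1} + σ_{r+2} + … + σ_N), where ‖·‖ is the operator norm of a q×p complex matrix. -/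

import Mathlib

open Matrix Complex

/-- `A` is Hurwitz if every eigenvalue of `A` over `ℂ` has negative real part. -/
def IsHurwitz {N : ℕ} (A : Matrix (Fin N) (Fin N) ℝ) : Prop :=
  ∀ μ ∈ spectrum ℂ (A.map (Complex.ofReal)), μ.re < 0

/-- The operator norm of a `q × p` complex matrix, viewed as a linear map
between the Euclidean spaces `ℂ^p` and `ℂ^q`. -/
noncomputable def matOpNorm {q p : ℕ} (M : Matrix (Fin q) (Fin p) ℂ) : ℝ :=
  ‖LinearMap.toContinuousLinearMap (Matrix.toEuclideanLin M)‖

/-- Column identity obtained from the Lyapunov equation, over `ℂ`. -/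
lemma bt_col {N m : ℕ} (A : Matrix (Fin N) (Fin N) ℝ) (d : Fin N → ℝ)
    (C : Matrix (Fin m) (Fin N) ℝ)
    (h : Aᵀ * Matrix.diagonal d + Matrix.diagonal d * A = -(Cᵀ * C)) (e : Fin N → ℂ) :
    (A.map ofReal)ᵀ *ᵥ (fun i => (d i : ℂ) * e i) +
      (fun i => (d i : ℂ) * (A.map ofReal *ᵥ e) i) =
      - ((C.map ofReal)ᵀ *ᵥ (C.map ofReal *ᵥ e)) := by
  have h2 : (A.map ofReal)ᵀ * Matrix.diagonal (fun i => (d i : ℂ))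
      + Matrix.diagonal (fun i => (d i : ℂ)) * (A.map ofReal)
      = -((C.map ofReal)ᵀ * (C.map ofReal)) := by
    ext i j
    have := congrArg (fun x : ℝ => (x : ℂ)) (congrFun (congrFun h i) j)
    simp only [Matrix.add_apply, Matrix.neg_apply, Matrix.mul_diagonal, Matrix.diagonal_mul,
      Matrix.transpose_apply, Matrix.mul_apply (M := Cᵀ),
      Matrix.mul_apply (M := (C.map ofReal)ᵀ), Matrix.map_apply] at this ⊢
    exact_mod_cast this
  have h3 := congrArg (fun M => M *ᵥ e) h2
  simp only [add_mulVec, neg_mulVec, ← mulVec_mulVec] at h3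
  have hd : ∀ v : Fin N → ℂ, Matrix.diagonal (fun i => (d i : ℂ)) *ᵥ v
      = fun i => (d i : ℂ) * v i := by
    intro v; ext i; simp [mulVec_diagonal]
  rw [hd, hd] at h3
  exact h3

/-- Energy identity. -/
lemma bt_energy {N m : ℕ} (A : Matrix (Fin N) (Fin N) ℝ) (d : Fin N → ℝ)
    (C : Matrix (Fin m) (Fin N) ℝ)
    (h : Aᵀ * Matrix.diagonal d + Matrix.diagonal d * A = -(Cᵀ * C)) (e : Fin N → ℂ) (ω : ℝ) :
    ∑ j, ‖(C.map ofReal *ᵥ e) j‖ ^ 2 =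
      2 * ∑ i, d i * (star (e i) * (I * ω * e i - (A.map ofReal *ᵥ e) i)).re := by
  have hc := congrArg (fun v => (star e ⬝ᵥ v).re) (bt_col A d C h e)
  simp only [dotProduct_add, dotProduct_neg] at hc
  have hstar : ∀ {k l : ℕ} (M : Matrix (Fin k) (Fin l) ℝ) (v : Fin l → ℂ) (w : Fin k → ℂ),
      star v ⬝ᵥ ((M.map ofReal)ᵀ *ᵥ w) = star (M.map ofReal *ᵥ v) ⬝ᵥ w := by
    intro k l M v w
    rw [star_mulVec, dotProduct_mulVec]
    congr 2
    ext i j; simp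
  rw [hstar, hstar] at hc
  have e1 : (star (C.map ofReal *ᵥ e) ⬝ᵥ (C.map ofReal *ᵥ e)).re
      = ∑ j, ‖(C.map ofReal *ᵥ e) j‖ ^ 2 := by
    simp only [dotProduct, Complex.re_sum]
    refine Finset.sum_congr rfl fun j _ => ?_
    rw [Complex.sq_norm, Complex.normSq_apply]
    simp
  rw [← e1]
  have e2 : ∀ z w : ℂ, (z + w).re = z.re + w.re := fun _ _ => rfl
  rw [e2, Complex.neg_re] at hc
  rw [← neg_eq_iff_eq_neg.mpr hc]
  simp only [dotProduct, Complex.re_sum]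
  rw [← Finset.sum_add_distrib, ← Finset.sum_neg_distrib, Finset.mul_sum]
  refine Finset.sum_congr rfl fun j _ => ?_
  simp
  ring

/-- `z` is supported on the first `k` states and solves the truncated equations. -/
def BTSol {N : ℕ} (A : Matrix (Fin N) (Fin N) ℝ) (k : ℕ) (ω : ℝ) (b z : Fin N → ℂ) : Prop :=
  (∀ i : Fin N, k ≤ (i : ℕ) → z i = 0) ∧
    ∀ i : Fin N, (i : ℕ) < k → I * ω * z i - (A.map ofReal *ᵥ z) i = b i

lemma bt_ker_step {N m : ℕ} (A : Matrix (Fin N) (Fin N) ℝ) (d : Fin N → ℝ)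
    (C : Matrix (Fin m) (Fin N) ℝ)
    (h : Aᵀ * Matrix.diagonal d + Matrix.diagonal d * A = -(Cᵀ * C))
    (k : ℕ) (ω : ℝ) (z : Fin N → ℂ) (hz : BTSol A k ω 0 z) :
    C.map ofReal *ᵥ z = 0 ∧ BTSol Aᵀ k (-ω) 0 (fun i => (d i : ℂ) * z i) := by
  have hC : C.map ofReal *ᵥ z = 0 := by
    have := bt_energy A d C h z ω
    have h0 : ∑ i, d i * (star (z i) * (I * ω * z i - (A.map ofReal *ᵥ z) i)).re = 0 := by
      refine Finset.sum_eq_zero fun i _ => ?_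
      by_cases hi : (i : ℕ) < k
      · rw [hz.2 i hi]; simp
      · rw [hz.1 i (by omega)]; simp
    rw [h0, mul_zero, Finset.sum_eq_zero_iff_of_nonneg (fun _ _ => by positivity)] at this
    ext j
    simpa using this j (Finset.mem_univ _)
  refine ⟨hC, fun i hi => by simp [hz.1 i hi], fun i hi => ?_⟩
  have hcol := congrFun (bt_col A d C h z) i
  rw [hC] at hcol
  simp only [mulVec_zero, neg_zero, Pi.add_apply, Pi.zero_apply] at hcol
  have h2 := hz.2 i hi
  simp only [Pi.zero_apply] at h2 ⊢
  rw [← Matrix.transpose_map] at hcol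
  push_cast
  linear_combination (-1) * hcol - (d i : ℂ) * h2

lemma bt_ker {N p q : ℕ}
    (A : Matrix (Fin N) (Fin N) ℝ) (hA : IsHurwitz A)
    (B : Matrix (Fin N) (Fin p) ℝ) (L : Matrix (Fin q) (Fin N) ℝ)
    (σ : Fin N → ℝ) (hmono : StrictAnti σ) (hpos : ∀ i, 0 < σ i)
    (hctrb : A * Matrix.diagonal σ + Matrix.diagonal σ * Aᵀ = -(B * Bᵀ))
    (hobsv : Aᵀ * Matrix.diagonal σ + Matrix.diagonal σ * A = -(Lᵀ * L))
    (k : ℕ) (ω : ℝ) (z : Fin N → ℂ) (hz : BTSol A k ω 0 z) : z = 0 := by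
  by_contra hne
  have hctrb' : Aᵀᵀ * Matrix.diagonal σ + Matrix.diagonal σ * Aᵀ = -(Bᵀᵀ * Bᵀ) := by
    simpa using hctrb
  let K : Submodule ℂ (Fin N → ℂ) :=
    { carrier := {z | BTSol A k ω 0 z}
      zero_mem' := ⟨fun _ _ => rfl, fun _ _ => by simp⟩
      add_mem' := by
        rintro a b ⟨ha, ha'⟩ ⟨hb, hb'⟩
        refine ⟨fun i hi => by simp [ha i hi, hb i hi], fun i hi => ?_⟩
        have h1 := ha' i hi
        have h2 := hb' i hi
        simp only [mulVec_add, Pi.add_apply, Pi.zero_apply] at h1 h2 ⊢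
        linear_combination h1 + h2
      smul_mem' := by
        rintro c a ⟨ha, ha'⟩
        refine ⟨fun i hi => by simp [ha i hi], fun i hi => ?_⟩
        have h1 := ha' i hi
        simp only [mulVec_smul, Pi.smul_apply, Pi.zero_apply, smul_eq_mul] at h1 ⊢
        linear_combination c * h1 }
  let T : Module.End ℂ (Fin N → ℂ) :=
    Matrix.toLin' (Matrix.diagonal (fun i => ((σ i : ℂ) * (σ i : ℂ))))
  have hT : ∀ v i, T v i = (σ i : ℂ) * (σ i : ℂ) * v i := by
    intro v i; simp [T, mulVec_diagonal]
  have hTK : ∀ v ∈ K, T v ∈ K := by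
    intro v hv
    have h1 := (bt_ker_step A σ L hobsv k ω v hv).2
    have h2 := (bt_ker_step Aᵀ σ Bᵀ hctrb' k (-ω) _ h1).2
    simp only [transpose_transpose, neg_neg] at h2
    have : T v = fun i => (σ i : ℂ) * ((σ i : ℂ) * v i) := by
      ext i; rw [hT]; ring
    change BTSol A k ω 0 (T v)
    rw [this]; exact h2
  have : Nontrivial K := ⟨⟨⟨z, hz⟩, 0, fun h => hne (congrArg Subtype.val h)⟩⟩
  obtain ⟨μ, hμ⟩ := Module.End.exists_eigenvalue (T.restrict hTK)
  obtain ⟨⟨x, hxK⟩, hx⟩ := hμ.exists_hasEigenvector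
  have hx0 : x ≠ 0 := fun h => hx.2 (Subtype.ext h)
  have hxe : T x = μ • x := congrArg Subtype.val hx.apply_eq_smul
  obtain ⟨i, hi⟩ := Function.ne_iff.mp hx0
  simp only [Pi.zero_apply] at hi
  have hother : ∀ j, j ≠ i → x j = 0 := by
    intro j hj
    by_contra hxj
    have h1 := congrFun hxe i
    have h2 := congrFun hxe j
    rw [hT] at h1 h2
    simp only [Pi.smul_apply, smul_eq_mul] at h1 h2
    have h3 := (mul_right_cancel₀ hi h1).trans (mul_right_cancel₀ hxj h2).symm
    have h4 : σ i * σ i = σ j * σ j := by exact_mod_cast h3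
    exact hj (hmono.injective (mul_self_inj_of_nonneg (hpos j).le (hpos i).le |>.mp h4.symm))
  have hxs : x = Pi.single i (x i) := by
    ext j
    by_cases hj : j = i
    · subst hj; simp
    · simp [hother j hj, hj]
  have s1 := bt_ker_step A σ L hobsv k ω x hxK
  have s2 := bt_ker_step Aᵀ σ Bᵀ hctrb' k (-ω) _ s1.2
  have hLi : ∀ j, L j i = 0 := by
    intro j
    have := congrFun s1.1 j
    rw [hxs] at this
    simpa [hi] using this
  have hBi : ∀ j, B i j = 0 := by
    intro j
    have := congrFun s2.1 j
    have e : (fun l => (σ l : ℂ) * x l) = Pi.single i ((σ i : ℂ) * x i) := by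
      ext l
      by_cases hl : l = i
      · subst hl; simp
      · simp [hother l hl, hl]
    rw [e] at this
    simpa [hi, (hpos i).ne'] using this
  have hAi : ∀ j, A j i = 0 := by
    intro j
    have h1 := congrFun (congrFun hobsv j) i
    have h2 := congrFun (congrFun hctrb j) i
    simp [Matrix.mul_apply (M := Lᵀ), Matrix.mul_apply (M := B), hLi, hBi] at h1 h2
    have h3 : A j i * (σ i * σ i - σ j * σ j) = 0 := by
      linear_combination σ i * h2 - σ j * h1
    by_cases hj : j = i
    · subst hj
      have : A j j * (2 * σ j) = 0 := by linarith
      rcases mul_eq_zero.mp this with h | h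
      · exact h
      · linarith [hpos j]
    · rcases mul_eq_zero.mp h3 with h | h
      · exact h
      · exact absurd (hmono.injective
          (mul_self_inj_of_nonneg (hpos j).le (hpos i).le |>.mp (by linarith))) hj
  have h0 : (0 : ℂ) ∈ spectrum ℂ (A.map ofReal) := by
    rw [spectrum.zero_mem_iff, Matrix.isUnit_iff_isUnit_det, isUnit_iff_ne_zero, not_not]
    exact Matrix.det_eq_zero_of_column_eq_zero i (fun j => by simp [hAi j])
  simpa using hA 0 h0

lemma bt_step {N p q : ℕ}
    (A : Matrix (Fin N) (Fin N) ℝ)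
    (B : Matrix (Fin N) (Fin p) ℝ) (L : Matrix (Fin q) (Fin N) ℝ)
    (σ : Fin N → ℝ) (hpos : ∀ i, 0 < σ i)
    (hctrb : A * Matrix.diagonal σ + Matrix.diagonal σ * Aᵀ = -(B * Bᵀ))
    (hobsv : Aᵀ * Matrix.diagonal σ + Matrix.diagonal σ * A = -(Lᵀ * L))
    (k : Fin N) (ω : ℝ) (u : Fin p → ℂ) (z z' : Fin N → ℂ)
    (hz : BTSol A k ω (B.map ofReal *ᵥ u) z)
    (hz' : BTSol A (k + 1) ω (B.map ofReal *ᵥ u) z') :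
    ∑ j, ‖(L.map ofReal *ᵥ (z' - z)) j‖ ^ 2 ≤ (2 * σ k) ^ 2 * ∑ j, ‖u j‖ ^ 2 := by
  have hinv : Aᵀ * Matrix.diagonal (fun i => (σ i)⁻¹) + Matrix.diagonal (fun i => (σ i)⁻¹) * A
      = -((Bᵀ * Matrix.diagonal (fun i => (σ i)⁻¹))ᵀ * (Bᵀ * Matrix.diagonal (fun i => (σ i)⁻¹))) := by
    ext i j
    have h1 := congrFun (congrFun hctrb i) j
    simp only [Matrix.add_apply, Matrix.mul_diagonal, Matrix.diagonal_mul, Matrix.transpose_apply,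
      Matrix.neg_apply, Matrix.mul_apply (N := Bᵀ)] at h1
    simp only [Matrix.add_apply, Matrix.mul_diagonal, Matrix.diagonal_mul, Matrix.transpose_apply,
      Matrix.neg_apply, Matrix.mul_apply (M := (Bᵀ * Matrix.diagonal (fun i => (σ i)⁻¹))ᵀ)]
    have h2 : ∑ x, B i x * (σ i)⁻¹ * (B j x * (σ j)⁻¹)
        = (σ i)⁻¹ * (σ j)⁻¹ * ∑ x, B i x * B j x := by
      rw [Finset.mul_sum]; exact Finset.sum_congr rfl fun _ _ => by ring
    rw [h2]
    have hi := (hpos i).ne'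
    have hj := (hpos j).ne'
    have h3 : ∑ x, B i x * B j x = -(A i j * σ j + σ i * A j i) := by linarith
    rw [h3]; field_simp; ring
  have E1 := bt_energy A σ L hobsv (z' - z) ω
  have E2 := bt_energy A _ _ hinv (z' + z) ω
  set g : Fin p → ℂ := (Bᵀ * Matrix.diagonal (fun i => (σ i)⁻¹)).map ofReal *ᵥ (z' + z) with hg
  set b : Fin N → ℂ := B.map ofReal *ᵥ u with hb
  set w : ℂ := I * ω * (z' - z) k - (A.map ofReal *ᵥ (z' - z)) k with hw
  have hzk : z k = 0 := hz.1 k le_rfl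
  have S1 : ∑ i, σ i * (star ((z' - z) i) * (I * ω * (z' - z) i
      - (A.map ofReal *ᵥ (z' - z)) i)).re = σ k * (star (z' k) * w).re := by
    rw [Finset.sum_eq_single k]
    · rw [← hw]; simp [hzk]
    · intro i _ hik
      rcases lt_or_gt_of_ne (fun h => hik (Fin.ext h) : (i : ℕ) ≠ k) with h | h
      · have h1 := hz.2 i h
        have h2 := hz'.2 i (by omega)
        have : I * ω * (z' - z) i - (A.map ofReal *ᵥ (z' - z)) i = 0 := by
          simp only [mulVec_sub, Pi.sub_apply]
          linear_combination h2 - h1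
        rw [this]; simp
      · simp [hz.1 i h.le, hz'.1 i h]
    · simp
  have S2 : ∑ i, (σ i)⁻¹ * (star ((z' + z) i) * (I * ω * (z' + z) i
      - (A.map ofReal *ᵥ (z' + z)) i)).re
      = 2 * (∑ i, (σ i)⁻¹ * (star ((z' + z) i) * b i).re) - (σ k)⁻¹ * (star (z' k) * w).re := by
    have : ∀ i, (σ i)⁻¹ * (star ((z' + z) i) * (I * ω * (z' + z) i
      - (A.map ofReal *ᵥ (z' + z)) i)).re = 2 * ((σ i)⁻¹ * (star ((z' + z) i) * b i).re)
        - if i = k then (σ k)⁻¹ * (star (z' k) * w).re else 0 := by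
      intro i
      by_cases hik : i = k
      · subst hik
        have h2 := hz'.2 i (by omega)
        have : I * ω * (z' + z) i - (A.map ofReal *ᵥ (z' + z)) i = 2 * b i - w := by
          rw [hw]
          simp only [mulVec_sub, mulVec_add, Pi.sub_apply, Pi.add_apply]
          linear_combination 2 * h2
        rw [this]
        simp [hzk]
        ring
      · rcases lt_or_gt_of_ne (fun h => hik (Fin.ext h) : (i : ℕ) ≠ k) with h | h
        · have h1 := hz.2 i h
          have h2 := hz'.2 i (by omega)
          have : I * ω * (z' + z) i - (A.map ofReal *ᵥ (z' + z)) i = 2 * b i := by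
            simp only [mulVec_add, Pi.add_apply]
            linear_combination h2 + h1
          rw [this]; simp [hik]; ring
        · simp [hz.1 i h.le, hz'.1 i h, hik]
    rw [Finset.sum_congr rfl (fun i _ => this i), Finset.sum_sub_distrib, ← Finset.mul_sum]
    simp
  have S3 : ∑ i, (σ i)⁻¹ * (star ((z' + z) i) * b i).re = ∑ j, (star (g j) * u j).re := by
    have hgj : ∀ j, star (g j) * u j = ∑ i, ((σ i)⁻¹ : ℝ) * (star ((z' + z) i) * (B i j * u j)) := by
      intro j
      rw [hg]
      simp only [mulVec, dotProduct, star_sum, Finset.sum_mul]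
      refine Finset.sum_congr rfl fun i _ => ?_
      simp [Matrix.mul_diagonal]
      ring
    have hbi : ∀ i, b i = ∑ j, (B i j : ℂ) * u j := fun i => by
      rw [hb]; simp [mulVec, dotProduct]
    simp only [hgj, hbi, Complex.re_sum, Finset.mul_sum]
    rw [Finset.sum_comm]
    refine Finset.sum_congr rfl fun j _ => Finset.sum_congr rfl fun i _ => ?_
    rw [Complex.re_ofReal_mul]
  rw [S1] at E1
  rw [S2, S3] at E2
  have hk := hpos k
  have hbound : 4 * ∑ j, (star (g j) * u j).re - ∑ j, ‖g j‖ ^ 2 ≤ 4 * ∑ j, ‖u j‖ ^ 2 := by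
    rw [Finset.mul_sum, Finset.mul_sum, ← Finset.sum_sub_distrib]
    refine Finset.sum_le_sum fun j _ => ?_
    rw [Complex.sq_norm, Complex.sq_norm, Complex.normSq_apply, Complex.normSq_apply]
    simp
    nlinarith [sq_nonneg ((g j).re - 2 * (u j).re), sq_nonneg ((g j).im - 2 * (u j).im)]
  have hval : 2 * (σ k * (star (z' k) * w).re)
      = σ k ^ 2 * (4 * ∑ j, (star (g j) * u j).re - ∑ j, ‖g j‖ ^ 2) := by
    rw [E2]; field_simp; ring
  rw [E1, hval]
  nlinarith [mul_le_mul_of_nonneg_left hbound (sq_nonneg (σ k))]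

lemma bt_exists {N : ℕ} (A : Matrix (Fin N) (Fin N) ℝ) (k : ℕ) (ω : ℝ)
    (hker : ∀ z, BTSol A k ω 0 z → z = 0) (b : Fin N → ℂ) : ∃ z, BTSol A k ω b z := by
  let T : Module.End ℂ (Fin N → ℂ) :=
    { toFun := fun z i => if (i : ℕ) < k then I * ω * z i - (A.map ofReal *ᵥ z) i else z i
      map_add' := by
        intro x y; ext i
        simp only [mulVec_add, Pi.add_apply]
        split_ifs <;> ring
      map_smul' := by
        intro c x; ext i
        simp only [mulVec_smul, Pi.smul_apply, smul_eq_mul, RingHom.id_apply]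
        split_ifs <;> ring }
  have hTi : ∀ z i, T z i = if (i : ℕ) < k then I * ω * z i - (A.map ofReal *ᵥ z) i else z i :=
    fun _ _ => rfl
  have hinj : Function.Injective T := by
    rw [injective_iff_map_eq_zero]
    intro z hz
    refine hker z ⟨fun i hi => ?_, fun i hi => ?_⟩
    · have := congrFun hz i
      rwa [hTi, if_neg (by omega)] at this
    · have := congrFun hz i
      rwa [hTi, if_pos hi] at this
  obtain ⟨z, hz⟩ := (LinearMap.injective_iff_surjective.mp hinj)
    (fun i => if (i : ℕ) < k then b i else 0)
  refine ⟨z, fun i hi => ?_, fun i hi => ?_⟩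
  · have := congrFun hz i
    rwa [hTi, if_neg (by omega), if_neg (by omega)] at this
  · have := congrFun hz i
    rwa [hTi, if_pos hi, if_pos hi] at this

/-- Extension by zero. -/
lemma bt_ext {N r m : ℕ} (h : r ≤ N) (M : Matrix (Fin m) (Fin N) ℝ) (z : Fin N → ℂ)
    (hz : ∀ i : Fin N, r ≤ (i : ℕ) → z i = 0) :
    (M.submatrix id (Fin.castLE h)).map ofReal *ᵥ (fun i => z (Fin.castLE h i))
      = M.map ofReal *ᵥ z := by
  ext j
  simp only [mulVec, dotProduct, Matrix.map_apply, Matrix.submatrix_apply, id]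
  have hinj : Function.Injective (Fin.castLE h) := Fin.castLE_injective h
  refine Fintype.sum_of_injective _ hinj _ _ ?_ (fun _ => rfl)
  intro i hi
  have : r ≤ (i : ℕ) := by
    by_contra hlt
    exact hi ⟨⟨i, by omega⟩, Fin.ext rfl⟩
  simp [hz i this]

lemma bt_unit {N r : ℕ} (h : r ≤ N) (A : Matrix (Fin N) (Fin N) ℝ) (ω : ℝ)
    (hker : ∀ z, BTSol A r ω 0 z → z = 0) :
    IsUnit ((Complex.I * ω) • (1 : Matrix (Fin r) (Fin r) ℂ)
        - (A.submatrix (Fin.castLE h) (Fin.castLE h)).map ofReal) := by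
  rw [← Matrix.mulVec_injective_iff_isUnit]
  change Function.Injective (Matrix.mulVecLin _)
  rw [injective_iff_map_eq_zero]
  intro x hx
  let z : Fin N → ℂ := fun i => if hi : (i : ℕ) < r then x ⟨i, hi⟩ else 0
  have hzx : (fun i => z (Fin.castLE h i)) = x := by
    ext i; simp [z]
  have hz0 : ∀ i : Fin N, r ≤ (i : ℕ) → z i = 0 := fun i hi => by simp [z, hi]
  have hzS : BTSol A r ω 0 z := by
    refine ⟨hz0, fun i hi => ?_⟩
    have h1 := congrFun (bt_ext h A z hz0) i
    rw [hzx] at h1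
    have h2 := congrFun hx ⟨i, hi⟩
    simp only [mulVecLin_apply, sub_mulVec, smul_mulVec, one_mulVec, Pi.sub_apply, Pi.smul_apply,
      smul_eq_mul, Pi.zero_apply] at h2 ⊢
    rw [← h1]
    have h3 : z i = x ⟨i, hi⟩ := by simp [z, hi]
    rw [h3]
    exact h2
  have := hker z hzS
  rw [← hzx, this]
  rfl

lemma bt_out {N r p q : ℕ} (h : r ≤ N) (A : Matrix (Fin N) (Fin N) ℝ)
    (B : Matrix (Fin N) (Fin p) ℝ) (L : Matrix (Fin q) (Fin N) ℝ) (ω : ℝ)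
    (hu : IsUnit ((Complex.I * ω) • (1 : Matrix (Fin r) (Fin r) ℂ)
        - (A.submatrix (Fin.castLE h) (Fin.castLE h)).map ofReal)) (u : Fin p → ℂ) (z : Fin N → ℂ)
    (hz : BTSol A r ω (B.map ofReal *ᵥ u) z) :
    ((L.submatrix id (Fin.castLE h)).map ofReal *
      ((Complex.I * ω) • (1 : Matrix (Fin r) (Fin r) ℂ)
        - (A.submatrix (Fin.castLE h) (Fin.castLE h)).map ofReal)⁻¹ *
      (B.submatrix (Fin.castLE h) id).map ofReal) *ᵥ u = L.map ofReal *ᵥ z := by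
  have key : (B.submatrix (Fin.castLE h) id).map ofReal *ᵥ u =
      ((Complex.I * ω) • (1 : Matrix (Fin r) (Fin r) ℂ)
        - (A.submatrix (Fin.castLE h) (Fin.castLE h)).map ofReal) *ᵥ
        (fun i => z (Fin.castLE h i)) := by
    ext i
    have h1 := congrFun (bt_ext h A z hz.1) (Fin.castLE h i)
    have h2 := hz.2 (Fin.castLE h i) (by simp)
    simp only [sub_mulVec, smul_mulVec, one_mulVec, Pi.sub_apply, Pi.smul_apply, smul_eq_mul]
    rw [← h1] at h2
    exact h2.symm
  rw [← mulVec_mulVec, ← mulVec_mulVec, key, mulVec_mulVec _ _⁻¹,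
    Matrix.nonsing_inv_mul _ ((Matrix.isUnit_iff_isUnit_det _).mp hu), one_mulVec]
  exact bt_ext h L z hz.1

/-- Balanced truncation error bound: for a stable balanced
realization `(A, B, L)` with Gramians `Σ = diag(σ₁ > … > σ_N > 0)`, truncating
the last `N − r` states gives a reduced model `(Ã, B̃, L̃)` such that both
resolvents `iωI − A`, `iωI − Ã` are invertible for every real `ω` and the
`H∞` error satisfies
`‖L(iωI − A)⁻¹B − L̃(iωI − Ã)⁻¹B̃‖ ≤ 2(σ_{r+1} + … + σ_N)` for all `ω`. -/
theorem balanced_truncation_error_bound {N p q : ℕ}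
    (A : Matrix (Fin N) (Fin N) ℝ) (hA : IsHurwitz A)
    (B : Matrix (Fin N) (Fin p) ℝ) (L : Matrix (Fin q) (Fin N) ℝ)
    (σ : Fin N → ℝ) (hmono : StrictAnti σ) (hpos : ∀ i, 0 < σ i)
    (hctrb : A * Matrix.diagonal σ + Matrix.diagonal σ * Aᵀ = -(B * Bᵀ))
    (hobsv : Aᵀ * Matrix.diagonal σ + Matrix.diagonal σ * A = -(Lᵀ * L))
    (r : ℕ) (hr1 : 1 ≤ r) (hrN : r < N) :
    letI h : r ≤ N := le_of_lt hrN
    letI At := A.submatrix (Fin.castLE h) (Fin.castLE h)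
    letI Bt := B.submatrix (Fin.castLE h) id
    letI Lt := L.submatrix id (Fin.castLE h)
    (∀ ω : ℝ, IsUnit ((Complex.I * ω) • (1 : Matrix (Fin N) (Fin N) ℂ)
        - A.map ofReal)) ∧
    (∀ ω : ℝ, IsUnit ((Complex.I * ω) • (1 : Matrix (Fin r) (Fin r) ℂ)
        - At.map ofReal)) ∧
    ∀ ω : ℝ,
      matOpNorm
        (L.map ofReal *
            ((Complex.I * ω) • (1 : Matrix (Fin N) (Fin N) ℂ)
              - A.map ofReal)⁻¹ * B.map ofReal -
          Lt.map ofReal *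
            ((Complex.I * ω) • (1 : Matrix (Fin r) (Fin r) ℂ)
              - At.map ofReal)⁻¹ * Bt.map ofReal)
        ≤ 2 * ∑ i ∈ Finset.univ.filter (fun i : Fin N => r ≤ (i : ℕ)), σ i := by
  have hker : ∀ k ω z, BTSol A k ω 0 z → z = 0 := fun k ω z hz =>
    bt_ker A hA B L σ hmono hpos hctrb hobsv k ω z hz
  have hcast : Fin.castLE (le_refl N) = id := by ext i; rfl
  have hU : ∀ ω : ℝ, IsUnit ((Complex.I * ω) • (1 : Matrix (Fin N) (Fin N) ℂ)
        - A.map ofReal) := by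
    intro ω
    have := bt_unit le_rfl A ω (hker N ω)
    rwa [hcast, Matrix.submatrix_id_id] at this
  refine ⟨hU, fun ω => bt_unit hrN.le A ω (hker r ω), fun ω => ?_⟩
  have hσ : 0 ≤ 2 * ∑ i ∈ Finset.univ.filter (fun i : Fin N => r ≤ (i : ℕ)), σ i :=
    mul_nonneg zero_le_two (Finset.sum_nonneg fun i _ => (hpos i).le)
  refine ContinuousLinearMap.opNorm_le_bound _ hσ fun v => ?_
  set u : Fin p → ℂ := WithLp.ofLp v with hu
  choose z hz using fun k : ℕ => bt_exists A k ω (hker k ω) (B.map ofReal *ᵥ u)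
  have hN : (L.map ofReal * ((Complex.I * ω) • (1 : Matrix (Fin N) (Fin N) ℂ)
      - A.map ofReal)⁻¹ * B.map ofReal) *ᵥ u = L.map ofReal *ᵥ z N := by
    have := bt_out le_rfl A B L ω (bt_unit le_rfl A ω (hker N ω)) u (z N) (hz N)
    rwa [hcast, Matrix.submatrix_id_id, Matrix.submatrix_id_id, Matrix.submatrix_id_id] at this
  have hr := bt_out hrN.le A B L ω (bt_unit hrN.le A ω (hker r ω)) u (z r) (hz r)
  rw [LinearMap.coe_toContinuousLinearMap', Matrix.toLpLin_apply, sub_mulVec, hN, hr]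
  have hstep : ∀ k : Fin N, ‖WithLp.toLp 2 (L.map ofReal *ᵥ (z (k + 1) - z k))‖
      ≤ 2 * σ k * ‖v‖ := by
    intro k
    have := bt_step A B L σ hpos hctrb hobsv k ω u _ _ (hz k) (hz (k + 1))
    have hk := hpos k
    refine le_of_sq_le_sq ?_ (by positivity)
    rw [mul_pow, EuclideanSpace.norm_sq_eq, EuclideanSpace.norm_sq_eq]
    exact this
  have hind : ∀ k, r ≤ k → k ≤ N → ‖WithLp.toLp 2 (L.map ofReal *ᵥ z k - L.map ofReal *ᵥ z r)‖
      ≤ 2 * (∑ i ∈ Finset.univ.filter (fun i : Fin N => r ≤ (i : ℕ) ∧ (i : ℕ) < k), σ i) * ‖v‖ := by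
    intro k hrk
    induction k, hrk using Nat.le_induction with
    | base =>
      intro _
      rw [sub_self, WithLp.toLp_zero, norm_zero]
      exact mul_nonneg (mul_nonneg zero_le_two (Finset.sum_nonneg fun i _ => (hpos i).le))
        (norm_nonneg _)
    | succ k hrk ih =>
      intro hkN
      have h1 := ih (by omega)
      have h2 := hstep ⟨k, by omega⟩
      have hs : Finset.univ.filter (fun i : Fin N => r ≤ (i : ℕ) ∧ (i : ℕ) < k + 1)
          = insert (⟨k, by omega⟩ : Fin N)
            (Finset.univ.filter (fun i : Fin N => r ≤ (i : ℕ) ∧ (i : ℕ) < k)) := by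
        ext i
        simp [Fin.ext_iff]
        omega
      rw [hs, Finset.sum_insert (by simp)]
      have h3 : WithLp.toLp 2 (L.map ofReal *ᵥ z (k + 1) - L.map ofReal *ᵥ z r)
          = WithLp.toLp 2 (L.map ofReal *ᵥ (z (k + 1) - z k))
            + WithLp.toLp 2 (L.map ofReal *ᵥ z k - L.map ofReal *ᵥ z r) := by
        rw [← WithLp.toLp_add, mulVec_sub]
        congr 1
        abel
      rw [h3]
      refine (norm_add_le _ _).trans ?_
      have := add_le_add h2 h1
      refine this.trans (le_of_eq ?_)
      ring
  have := hind N hrN.le le_rfl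
  simpa using this
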